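/- Let 0 < a < 1 < A be constants and let 𝒜 = ((a_{N,n})_{N∈ℕ})_{n∈ℕ} be a double sequence of weights on 𝔻 with a_{N,n+1} ≤ a_{N,n} ≤ a_{N+1,n} pointwise, satisfying condition (LOG) with constants a, A. If 𝒜 satisfies condition (Q)~, then 𝒜 satisfies condition (P̄₂): for every N there exist M ≥ N and n such that for every K ≥ M, every m and every ε > 0 there exist k and S > 0 with B_{M,m} ⊆ ε·B_{N,n} + S·B_{K,k}, i.e. every holomorphic f on 𝔻 with ‖f‖_{a_{M,m}} ≤ 1 can be written f = g + h with holomorphic g, h satisfying ‖g‖_{a_{N,n}} ≤ ε and ‖h‖_{a_{K,k}} ≤ S. -/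

import Mathlib

noncomputable section

open Complex

/-- The open unit disc in ℂ. -/
def uD : Set ℂ := {z : ℂ | ‖z‖ < 1}

/-- Holomorphic on the unit disc. -/
def Holo (f : ℂ → ℂ) : Prop := DifferentiableOn ℂ f uD

/-- A weight on 𝔻: continuous and strictly positive. -/
def IsWeight (v : ℂ → ℝ) : Prop :=
  ContinuousOn v uD ∧ ∀ z ∈ uD, 0 < v z

/-- Radial weight. -/
def Radial (v : ℂ → ℝ) : Prop :=
  ∀ z ∈ uD, ∀ w ∈ uD, ‖z‖ = ‖w‖ → v z = v w

/-- Non-increasing in the modulus. -/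
def NonInc (v : ℂ → ℝ) : Prop :=
  ∀ z ∈ uD, ∀ w ∈ uD, ‖z‖ ≤ ‖w‖ → v w ≤ v z

/-- r₀ = 0, r_κ = 1 - 2^(-2^κ) for κ ≥ 1. -/
def rseq (κ : ℕ) : ℝ := if κ = 0 then 0 else 1 - 1 / 2 ^ (2 ^ κ)

/-- Condition (LOG 1) for a single radial weight. -/
def Log1 (A : ℝ) (v : ℂ → ℝ) : Prop :=
  ∀ κ : ℕ, v (rseq κ : ℂ) ≤ A * v (rseq (κ + 1) : ℂ)

/-- Condition (LOG 2) for a single radial weight. -/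
def Log2 (a : ℝ) (v : ℂ → ℝ) : Prop :=
  ∀ κ : ℕ, v (rseq (κ + 1) : ℂ) ≤ a * v (rseq κ : ℂ)

/-- The weight tends to 0 as |z| → 1. -/
def VanishAtOne (v : ℂ → ℝ) : Prop :=
  ∀ ε > 0, ∃ r : ℝ, r < 1 ∧ ∀ z ∈ uD, r ≤ ‖z‖ → v z ≤ ε

/-- Associated growth function w~ of a growth condition w. -/
def growthTilde (w : ℂ → ℝ) (z : ℂ) : ℝ :=
  sSup {t : ℝ | ∃ g : ℂ → ℂ, Holo g ∧ (∀ x ∈ uD, ‖g x‖ ≤ w x) ∧ t = ‖g z‖}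

/-- Associated weight ṽ = 1/(1/v)~. -/
def assocWeight (v : ℂ → ℝ) (z : ℂ) : ℝ := (growthTilde (fun x => 1 / v x) z)⁻¹

/-- Monotonicity of the double sequence: decreasing in n, increasing in N. -/
def MonoSeq (a : ℕ → ℕ → ℂ → ℝ) : Prop :=
  ∀ N n, ∀ z ∈ uD, a N (n + 1) z ≤ a N n z ∧ a N n z ≤ a (N + 1) n z

/-- Condition (LOG) for a double sequence with constants 0 < a < 1 < A. -/
def SeqLOG (aa A : ℝ) (a : ℕ → ℕ → ℂ → ℝ) : Prop :=
  ∀ N n, Radial (a N n) ∧ NonInc (a N n) ∧ VanishAtOne (a N n) ∧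
    Log1 A (a N n) ∧ Log2 aa (a N n)

/-- Condition (Q). -/
def CondQ (a : ℕ → ℕ → ℂ → ℝ) : Prop :=
  ∀ N, ∃ M ≥ N, ∃ n, ∀ K ≥ M, ∀ m, ∀ ε > 0, ∃ k, ∃ S > 0,
    ∀ z ∈ uD, 1 / a M m z ≤ max (ε / a N n z) (S / a K k z)

/-- Condition (wQ). -/
def CondwQ (a : ℕ → ℕ → ℂ → ℝ) : Prop :=
  ∀ N, ∃ M ≥ N, ∃ n, ∀ K ≥ M, ∀ m, ∃ k, ∃ S > 0,
    ∀ z ∈ uD, 1 / a M m z ≤ max (S / a N n z) (S / a K k z)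

/-- Condition (Q)~. -/
def CondQTilde (a : ℕ → ℕ → ℂ → ℝ) : Prop :=
  ∀ N, ∃ M ≥ N, ∃ n, ∀ K ≥ M, ∀ m, ∀ ε > 0, ∃ k, ∃ S > 0,
    ∀ z ∈ uD, growthTilde (fun x => 1 / a M m x) z ≤
      growthTilde (fun x => max (ε / a N n x) (S / a K k x)) z

/-- Pointwise maximum max_{N=1,…,L} a_{N,n(N)}. -/
def finMax (a : ℕ → ℕ → ℂ → ℝ) (nn : ℕ → ℕ) (L : ℕ) (z : ℂ) : ℝ :=
  sSup {t : ℝ | ∃ N, 1 ≤ N ∧ N ≤ L ∧ t = a N (nn N) z}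

/-- Condition (B). -/
def CondB (a : ℕ → ℕ → ℂ → ℝ) : Prop :=
  ∀ nn : ℕ → ℕ, ∃ m, ∀ M, ∃ L, 1 ≤ L ∧ ∃ c > 0,
    ∀ z ∈ uD, a M m z ≤ c * finMax a nn L z

/-- Condition (B)~. -/
def CondBTilde (a : ℕ → ℕ → ℂ → ℝ) : Prop :=
  ∀ nn : ℕ → ℕ, ∃ m, ∀ M, ∃ L, 1 ≤ L ∧ ∃ c > 0,
    ∀ z ∈ uD, assocWeight (a M m) z ≤ c * assocWeight (finMax a nn L) z

/-- A weight is essential. -/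
def Essential (v : ℂ → ℝ) : Prop :=
  ∃ C > 0, ∀ z ∈ uD,
    growthTilde (fun x => 1 / v x) z ≤ 1 / v z ∧
    1 / v z ≤ C * growthTilde (fun x => 1 / v x) z

/-- Condition (Σ). -/
def CondSigma (a : ℕ → ℕ → ℂ → ℝ) : Prop :=
  ∀ N, ∃ K ≥ N, ∀ k, ∃ n ≥ k, ∀ ε > 0, ∃ Q : Set ℂ,
    IsCompact Q ∧ Q ⊆ uD ∧ ∀ z ∈ uD \ Q, a N n z / a K k z ≤ ε

/-- The Banach space Ha(𝔻) as a set of functions. -/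
def HaSet (v : ℂ → ℝ) : Set (ℂ → ℂ) :=
  {f | Holo f ∧ ∃ C : ℝ, ∀ z ∈ uD, v z * ‖f z‖ ≤ C}

/-!
The blocks `f_κ(z) = f(r_κ z) - f(r_{κ-1} z)` of a holomorphic `f` add up to `f`. If `|f| ≤ B` on
`|z| ≤ r_κ`, then `|f_κ| ≤ 2B` on the whole disc, and a Cauchy estimate improves this to
`|f_κ| ≤ 2 (1 - r_i) B` on `|z| ≤ r_j` when `κ = j + i + 1`. Since `1 - r_i` decays doubly
exponentially while (LOG 1) only allows `1 / w(r_κ)` to grow geometrically, and since (LOG 2) makes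
the blocks with `κ ≤ j` a geometric series, a sum over those blocks on which `|f| ≤ T / w(r_κ)` is
`O(T / w)`. So `f` can be split by distributing its blocks, and this only requires
`1 / a_{M,m} ≤ max (ε / a_{N,n}, S / a_{K,k})` at the points `r_κ`. There (Q)~ gives it up to a
constant, because the monomial `z ^ n` with `n + 1 = 1 / (1 - r_κ)`, suitably scaled, shows that
`1 / v` is comparable to its associated growth function at `r_κ`.
-/

open Filter Metric Topology

lemma uD_eq_ball : uD = ball (0 : ℂ) 1 := by
  ext z
  simp [uD]

lemma isOpen_uD : IsOpen uD := uD_eq_ball ▸ isOpen_ball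

/-! ### The radii `r_κ` -/

/-- The distance `1 - r_κ` of the point `r_κ` to the unit circle. -/
def dseq (κ : ℕ) : ℝ := 1 - rseq κ

lemma rseq_eq_one_sub (κ : ℕ) : rseq κ = 1 - dseq κ := by
  rw [dseq, sub_sub_cancel]

lemma rseq_zero : rseq 0 = 0 := if_pos rfl

lemma dseq_zero : dseq 0 = 1 := by
  rw [dseq, rseq_zero, sub_zero]

lemma dseq_succ (κ : ℕ) : dseq (κ + 1) = 1 / 2 ^ 2 ^ (κ + 1) := by
  simp [dseq, rseq]

lemma exists_dseq_eq_one_div (κ : ℕ) : ∃ n : ℕ, dseq κ = 1 / (n + 1) := by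
  cases κ with
  | zero => exact ⟨0, by simp [dseq_zero]⟩
  | succ κ =>
    refine ⟨2 ^ 2 ^ (κ + 1) - 1, ?_⟩
    rw [dseq_succ, Nat.cast_sub Nat.one_le_two_pow]
    simp

lemma dseq_pos (κ : ℕ) : 0 < dseq κ := by
  obtain ⟨n, hn⟩ := exists_dseq_eq_one_div κ
  rw [hn]
  positivity

lemma dseq_add_le (j i : ℕ) : dseq (j + i) ≤ dseq j * dseq i := by
  rcases j with _ | j
  · simp [dseq_zero]
  rcases i with _ | i
  · simp [dseq_zero]
  have two_le (k : ℕ) : 2 ≤ 2 ^ (k + 1) := Nat.le_self_pow k.succ_ne_zero 2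
  have exponents : 2 ^ (j + 1) + 2 ^ (i + 1) ≤ 2 ^ (j + 1 + i + 1) :=
    (Nat.add_le_mul (two_le j) (two_le i)).trans_eq (pow_add 2 (j + 1) (i + 1)).symm
  rw [← add_assoc, dseq_succ, dseq_succ, dseq_succ, one_div_mul_one_div, ← pow_add]
  gcongr
  norm_num

lemma dseq_succ_le_half (κ : ℕ) : dseq (κ + 1) ≤ dseq κ / 2 := by
  have dseq_one : dseq 1 = 1 / 4 := by norm_num [dseq_succ 0]
  calc dseq (κ + 1) ≤ dseq κ * dseq 1 := dseq_add_le κ 1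
    _ ≤ dseq κ / 2 := by
      rw [dseq_one]
      linarith [dseq_pos κ]

lemma dseq_succ_le_sq (κ : ℕ) : dseq (κ + 1) ≤ dseq κ ^ 2 := by
  cases κ with
  | zero => norm_num [dseq_zero, dseq_succ]
  | succ κ => rw [dseq_succ, dseq_succ, one_div_pow, ← pow_mul, ← pow_succ]

lemma rseq_monotone : Monotone rseq := monotone_nat_of_le_succ fun κ => by
  rw [rseq_eq_one_sub, rseq_eq_one_sub]
  linarith [dseq_succ_le_half κ, dseq_pos κ]

lemma rseq_nonneg (κ : ℕ) : 0 ≤ rseq κ :=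
  rseq_zero.symm.le.trans (rseq_monotone κ.zero_le)

lemma rseq_lt_one (κ : ℕ) : rseq κ < 1 := sub_pos.1 (dseq_pos κ)

lemma norm_rseq (κ : ℕ) : ‖(rseq κ : ℂ)‖ = rseq κ := by
  rw [norm_real, Real.norm_of_nonneg (rseq_nonneg κ)]

lemma mem_uD_of_norm_le_rseq {κ : ℕ} {z : ℂ} (hz : ‖z‖ ≤ rseq κ) : z ∈ uD :=
  hz.trans_lt (rseq_lt_one κ)

lemma rseq_mem_uD (κ : ℕ) : (rseq κ : ℂ) ∈ uD := mem_uD_of_norm_le_rseq (norm_rseq κ).le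

lemma norm_rseq_mul_le_norm (κ : ℕ) (z : ℂ) : ‖(rseq κ * z : ℂ)‖ ≤ ‖z‖ := by
  rw [norm_mul, norm_rseq]
  exact mul_le_of_le_one_left (norm_nonneg z) (rseq_lt_one κ).le

lemma norm_rseq_mul_le_rseq (κ : ℕ) {z : ℂ} (hz : z ∈ uD) : ‖(rseq κ * z : ℂ)‖ ≤ rseq κ := by
  rw [norm_mul, norm_rseq]
  exact mul_le_of_le_one_right (rseq_nonneg κ) (le_of_lt hz)

lemma tendsto_dseq : Tendsto dseq atTop (𝓝 0) := by
  have le_geometric (κ : ℕ) : dseq κ ≤ (1 / 2) ^ κ := by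
    induction κ with
    | zero => simp [dseq_zero]
    | succ κ ih =>
      rw [pow_succ]
      linarith [dseq_succ_le_half κ]
  exact squeeze_zero (fun κ => (dseq_pos κ).le) le_geometric
    (tendsto_pow_atTop_nhds_zero_of_lt_one (by norm_num) (by norm_num))

lemma tendsto_rseq : Tendsto rseq atTop (𝓝 1) := by
  simpa [dseq] using tendsto_dseq.const_sub 1

lemma exists_shell {z : ℂ} (hz : z ∈ uD) : ∃ j, ‖z‖ ≤ rseq j ∧ ∀ i < j, rseq i < ‖z‖ := by
  classical
  have hex : ∃ j, ‖z‖ ≤ rseq j := (tendsto_rseq.eventually (eventually_ge_nhds hz)).exists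
  exact ⟨Nat.find hex, Nat.find_spec hex, fun i hi => not_le.1 (Nat.find_min hex hi)⟩

lemma summable_dseq_mul_pow (A : ℝ) : Summable fun i => dseq i * A ^ (i + 1) := by
  have ratio_tendsto : Tendsto (fun i => dseq i * ‖A‖) atTop (𝓝 0) := by
    simpa using tendsto_dseq.mul_const ‖A‖
  refine summable_of_ratio_norm_eventually_le one_half_lt_one ?_
  filter_upwards [ratio_tendsto.eventually (eventually_le_nhds one_half_pos)] with i hi
  have norm_term (k : ℕ) : ‖dseq k * A ^ (k + 1)‖ = dseq k * ‖A‖ ^ (k + 1) := by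
    rw [norm_mul, norm_pow, Real.norm_of_nonneg (dseq_pos k).le]
  have := dseq_pos i
  rw [norm_term, norm_term]
  calc dseq (i + 1) * ‖A‖ ^ (i + 1 + 1)
      ≤ dseq i ^ 2 * ‖A‖ ^ (i + 1 + 1) := by gcongr; exact dseq_succ_le_sq i
    _ = dseq i * ‖A‖ * (dseq i * ‖A‖ ^ (i + 1)) := by ring
    _ ≤ 1 / 2 * (dseq i * ‖A‖ ^ (i + 1)) := by gcongr

/-- The sum `∑ (1 - r_i) A ^ (i + 1)`, on which the constants in all estimates depend. -/
def dseqSum (A : ℝ) : ℝ := ∑' i, dseq i * A ^ (i + 1)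

lemma dseq_mul_pow_le_dseqSum {A : ℝ} (hA : 0 ≤ A) (i : ℕ) : dseq i * A ^ (i + 1) ≤ dseqSum A :=
  (summable_dseq_mul_pow A).le_tsum i fun k _ => mul_nonneg (dseq_pos k).le (pow_nonneg hA _)

lemma le_dseqSum {A : ℝ} (hA : 0 ≤ A) : A ≤ dseqSum A := by
  simpa [dseq_zero] using dseq_mul_pow_le_dseqSum hA 0

/-! ### Weights along the radii -/

section Weights

variable {a A : ℝ} {v : ℂ → ℝ}

lemma NonInc.le_of_norm_le_rseq (hanti : NonInc v) {κ : ℕ} {z : ℂ} (hz : ‖z‖ ≤ rseq κ) :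
    v (rseq κ) ≤ v z :=
  hanti _ (mem_uD_of_norm_le_rseq hz) _ (rseq_mem_uD κ) (by rwa [norm_rseq])

lemma NonInc.le_of_rseq_le_norm (hanti : NonInc v) {κ : ℕ} {z : ℂ} (hz : z ∈ uD)
    (hκ : rseq κ ≤ ‖z‖) : v z ≤ v (rseq κ) :=
  hanti _ (rseq_mem_uD κ) _ hz (by rwa [norm_rseq])

lemma NonInc.norm_le_one_div (hanti : NonInc v) (hpos : ∀ z ∈ uD, 0 < v z) {f : ℂ → ℂ}
    (hf : ∀ z ∈ uD, v z * ‖f z‖ ≤ 1) {κ : ℕ} {z : ℂ} (hz : ‖z‖ ≤ rseq κ) :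
    ‖f z‖ ≤ 1 / v (rseq κ) := by
  rw [le_div_iff₀' (hpos _ (rseq_mem_uD κ))]
  exact (mul_le_mul_of_nonneg_right (hanti.le_of_norm_le_rseq hz) (norm_nonneg _)).trans
    (hf z (mem_uD_of_norm_le_rseq hz))

lemma Log1.one_le (hlog : Log1 A v) (hanti : NonInc v) (hpos : ∀ z ∈ uD, 0 < v z) : 1 ≤ A := by
  have decreasing : v (rseq 1) ≤ v (rseq 0) :=
    hanti.le_of_norm_le_rseq ((norm_rseq 0).le.trans (rseq_monotone zero_le_one))
  exact (le_mul_iff_one_le_left (hpos _ (rseq_mem_uD 1))).1 (decreasing.trans (hlog 0))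

lemma Log2.pos (hlog : Log2 a v) (hpos : ∀ z ∈ uD, 0 < v z) : 0 < a :=
  pos_of_mul_pos_left ((hpos _ (rseq_mem_uD 1)).trans_le (hlog 0)) (hpos _ (rseq_mem_uD 0)).le

lemma Log1.le_pow_mul (hlog : Log1 A v) (hA : 0 ≤ A) (κ i : ℕ) :
    v (rseq κ) ≤ A ^ i * v (rseq (κ + i)) := by
  induction i with
  | zero => simp
  | succ i ih =>
    calc v (rseq κ) ≤ A ^ i * v (rseq (κ + i)) := ih
      _ ≤ A ^ i * (A * v (rseq (κ + i + 1))) := by gcongr; exact hlog _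
      _ = A ^ (i + 1) * v (rseq (κ + (i + 1))) := by rw [pow_succ, mul_assoc, add_assoc]

lemma Log2.le_pow_mul (hlog : Log2 a v) (ha : 0 ≤ a) (κ i : ℕ) :
    v (rseq (κ + i)) ≤ a ^ i * v (rseq κ) := by
  induction i with
  | zero => simp
  | succ i ih =>
    calc v (rseq (κ + (i + 1))) ≤ a * v (rseq (κ + i)) := hlog _
      _ ≤ a * (a ^ i * v (rseq κ)) := by gcongr
      _ = a ^ (i + 1) * v (rseq κ) := by ring

lemma Log1.le_mul_of_shell (hlog : Log1 A v) (hanti : NonInc v) (hpos : ∀ z ∈ uD, 0 < v z)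
    {j : ℕ} {z : ℂ} (hz : z ∈ uD) (hj : ∀ i < j, rseq i < ‖z‖) : v z ≤ A * v (rseq j) := by
  cases j with
  | zero =>
    have decreasing : v z ≤ v (rseq 0) :=
      hanti.le_of_rseq_le_norm hz (rseq_zero.trans_le (norm_nonneg z))
    exact decreasing.trans
      (le_mul_of_one_le_left (hpos _ (rseq_mem_uD 0)).le (hlog.one_le hanti hpos))
  | succ j => exact (hanti.le_of_rseq_le_norm hz (hj j j.lt_succ_self).le).trans (hlog j)

end Weights

/-! ### The associated growth function at the radii -/

section Growth

variable {A : ℝ} {v w : ℂ → ℝ}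

lemma growthTilde_le {z : ℂ} (hz : z ∈ uD) (hw : 0 ≤ w z) : growthTilde w z ≤ w z := by
  refine Real.sSup_le ?_ hw
  rintro _ ⟨g, -, hg, rfl⟩
  exact hg z hz

lemma norm_le_growthTilde {g : ℂ → ℂ} (hg : Holo g) (hgw : ∀ x ∈ uD, ‖g x‖ ≤ w x) {z : ℂ}
    (hz : z ∈ uD) : ‖g z‖ ≤ growthTilde w z := by
  refine le_csSup ⟨w z, ?_⟩ ⟨g, hg, hgw, rfl⟩
  rintro _ ⟨h, -, hh, rfl⟩
  exact hh z hz

lemma add_one_mul_pow_mul_one_sub_le_one {x : ℝ} (hx₀ : 0 ≤ x) (hx₁ : x ≤ 1) (n : ℕ) :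
    (n + 1) * x ^ n * (1 - x) ≤ 1 := by
  have geom_le : (n + 1) * x ^ n ≤ ∑ k ∈ Finset.range (n + 1), x ^ k := by
    simpa using Finset.card_nsmul_le_sum (Finset.range (n + 1)) (x ^ ·) (x ^ n) fun k hk =>
      pow_le_pow_of_le_one hx₀ hx₁ (Finset.mem_range_succ_iff.1 hk)
  calc (n + 1) * x ^ n * (1 - x)
      ≤ (∑ k ∈ Finset.range (n + 1), x ^ k) * (1 - x) :=
        mul_le_mul_of_nonneg_right geom_le (sub_nonneg.2 hx₁)
    _ = 1 - x ^ (n + 1) := geom_sum_mul_neg x (n + 1)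
    _ ≤ 1 := sub_le_self 1 (pow_nonneg hx₀ _)

lemma one_le_exp_one_mul_one_sub_pow (n : ℕ) :
    1 ≤ Real.exp 1 * (1 - 1 / (n + 1 : ℝ)) ^ n := by
  rcases n.eq_zero_or_pos with rfl | hn
  · simp
  have hn' : (0 : ℝ) < n := Nat.cast_pos.2 hn
  have one_le_base : 1 ≤ Real.exp (1 / n) * (1 - 1 / (n + 1)) := by
    calc (1 : ℝ) = (1 / n + 1) * (1 - 1 / (n + 1)) := by field_simp; ring
      _ ≤ Real.exp (1 / n) * (1 - 1 / (n + 1)) := by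
        gcongr
        · rw [sub_nonneg, div_le_one (by positivity)]
          linarith
        · exact Real.add_one_le_exp _
  calc 1 ≤ (Real.exp (1 / n) * (1 - 1 / (n + 1))) ^ n := one_le_pow₀ one_le_base
    _ = Real.exp 1 * (1 - 1 / (n + 1 : ℝ)) ^ n := by
      rw [mul_pow, ← Real.exp_nat_mul, mul_one_div_cancel hn'.ne']

lemma norm_pow_le_dseq {n j i : ℕ} (hn : dseq (j + i) = 1 / (n + 1)) {z : ℂ}
    (hz : ‖z‖ ≤ rseq j) : ‖z‖ ^ n ≤ dseq i := by
  have hj := dseq_pos j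
  have gap : dseq j ≤ 1 - ‖z‖ := sub_le_sub_left hz 1
  have pow_mul_le : (n + 1) * ‖z‖ ^ n * dseq j ≤ 1 :=
    (mul_le_mul_of_nonneg_left gap (by positivity)).trans
      (add_one_mul_pow_mul_one_sub_le_one (norm_nonneg z) (by linarith) n)
  refine le_of_mul_le_mul_left ?_ hj
  calc dseq j * ‖z‖ ^ n ≤ 1 / (n + 1) := by
        rw [le_div_iff₀' (by positivity)]
        linarith
    _ = dseq (j + i) := hn.symm
    _ ≤ dseq j * dseq i := dseq_add_le j i

lemma Log1.mul_norm_pow_le (hlog : Log1 A v) (hanti : NonInc v) (hpos : ∀ z ∈ uD, 0 < v z)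
    {n κ : ℕ} (hn : dseq κ = 1 / (n + 1)) {z : ℂ} (hz : z ∈ uD) :
    v z * ‖z‖ ^ n ≤ dseqSum A * v (rseq κ) := by
  have hA : 1 ≤ A := hlog.one_le hanti hpos
  have hκ := hpos _ (rseq_mem_uD κ)
  obtain ⟨j, hzj, hj⟩ := exists_shell hz
  rcases lt_or_ge κ j with hκj | hjκ
  · calc v z * ‖z‖ ^ n ≤ v z :=
          mul_le_of_le_one_right (hpos z hz).le (pow_le_one₀ (norm_nonneg z) (le_of_lt hz))
      _ ≤ v (rseq κ) := hanti.le_of_rseq_le_norm hz (hj κ hκj).le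
      _ ≤ dseqSum A * v (rseq κ) :=
          le_mul_of_one_le_left hκ.le (hA.trans (le_dseqSum (by positivity)))
  · obtain ⟨i, rfl⟩ := Nat.exists_eq_add_of_le hjκ
    have weight_le : v z ≤ A * (A ^ i * v (rseq (j + i))) :=
      (hlog.le_mul_of_shell hanti hpos hz hj).trans
        (mul_le_mul_of_nonneg_left (hlog.le_pow_mul (by positivity) j i) (by positivity))
    calc v z * ‖z‖ ^ n ≤ A * (A ^ i * v (rseq (j + i))) * dseq i :=
          mul_le_mul weight_le (norm_pow_le_dseq hn hzj) (by positivity) (by positivity)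
      _ = dseq i * A ^ (i + 1) * v (rseq (j + i)) := by ring
      _ ≤ dseqSum A * v (rseq (j + i)) := by
          gcongr
          exact dseq_mul_pow_le_dseqSum (by positivity) i

lemma Log1.one_div_le_mul_growthTilde (hlog : Log1 A v) (hanti : NonInc v)
    (hpos : ∀ z ∈ uD, 0 < v z) (κ : ℕ) :
    1 / v (rseq κ) ≤ Real.exp 1 * dseqSum A * growthTilde (fun x => 1 / v x) (rseq κ) := by
  have hA : 0 < A := zero_lt_one.trans_le (hlog.one_le hanti hpos)
  have hD : 0 < dseqSum A := hA.trans_le (le_dseqSum hA.le)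
  have hκ := hpos _ (rseq_mem_uD κ)
  obtain ⟨n, hn⟩ := exists_dseq_eq_one_div κ
  let c : ℝ := 1 / (dseqSum A * v (rseq κ))
  have hc : 0 ≤ c := div_nonneg zero_le_one (mul_pos hD hκ).le
  let g : ℂ → ℂ := fun z => c * z ^ n
  have norm_g (z : ℂ) : ‖g z‖ = c * ‖z‖ ^ n := by
    rw [norm_mul, norm_pow, norm_real, Real.norm_of_nonneg hc]
  have holo_g : Holo g := ((differentiable_id.pow n).const_mul _).differentiableOn
  have g_le : ∀ x ∈ uD, ‖g x‖ ≤ 1 / v x := fun x hx => by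
    rw [norm_g, one_div_mul_eq_div, div_le_div_iff₀ (by positivity) (hpos x hx), one_mul, mul_comm]
    exact hlog.mul_norm_pow_le hanti hpos hn hx
  have one_le_exp_mul : 1 ≤ Real.exp 1 * rseq κ ^ n := by
    rw [rseq_eq_one_sub, hn]
    exact one_le_exp_one_mul_one_sub_pow n
  calc 1 / v (rseq κ) ≤ 1 / v (rseq κ) * (Real.exp 1 * rseq κ ^ n) :=
        le_mul_of_one_le_right (by positivity) one_le_exp_mul
    _ = Real.exp 1 * dseqSum A * ‖g (rseq κ)‖ := by
        rw [norm_g, norm_rseq]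
        simp only [c]
        field_simp
    _ ≤ Real.exp 1 * dseqSum A * growthTilde (fun x => 1 / v x) (rseq κ) := by
        gcongr
        exact norm_le_growthTilde holo_g g_le (rseq_mem_uD κ)

end Growth

/-! ### Blocks of a holomorphic function -/

section Blocks

/-- The blocks `f(r_κ z) - f(r_{κ-1} z)` of `f`, with `f(r₀ z) = f(0)` as the block of index `0`;
they telescope to `f`. -/
def block (f : ℂ → ℂ) : ℕ → ℂ → ℂ
  | 0, z => f (rseq 0 * z)
  | κ + 1, z => f (rseq (κ + 1) * z) - f (rseq κ * z)

lemma sum_range_succ_block (f : ℂ → ℂ) (z : ℂ) (n : ℕ) :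
    ∑ κ ∈ Finset.range (n + 1), block f κ z = f (rseq n * z) := by
  induction n with
  | zero => simp [block]
  | succ n ih => rw [Finset.sum_range_succ, ih, block, add_sub_cancel]

variable {f : ℂ → ℂ}

lemma Holo.holo_block (hf : Holo f) (κ : ℕ) : Holo (block f κ) := by
  have dilation (κ : ℕ) : DifferentiableOn ℂ (fun z : ℂ => f (rseq κ * z)) uD :=
    DifferentiableOn.comp hf (differentiable_id.const_mul _).differentiableOn fun z hz =>
      (norm_rseq_mul_le_norm κ z).trans_lt hz
  cases κ with
  | zero => exact dilation 0
  | succ κ => exact (dilation (κ + 1)).sub (dilation κ)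

lemma Holo.tendsto_sum_block (hf : Holo f) {z : ℂ} (hz : z ∈ uD) :
    Tendsto (fun n => ∑ κ ∈ Finset.range (n + 1), block f κ z) atTop (𝓝 (f z)) := by
  have dilation_tendsto : Tendsto (fun n => (rseq n * z : ℂ)) atTop (𝓝 z) := by
    simpa using ((continuous_ofReal.tendsto 1).comp tendsto_rseq).mul_const z
  have continuousAt_f : ContinuousAt f z := hf.continuousOn.continuousAt (isOpen_uD.mem_nhds hz)
  simp only [sum_range_succ_block]
  exact continuousAt_f.tendsto.comp dilation_tendsto

lemma norm_block_le_two_mul {κ : ℕ} {B : ℝ} (hB : ∀ x, ‖x‖ ≤ rseq κ → ‖f x‖ ≤ B) {z : ℂ}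
    (hz : z ∈ uD) : ‖block f κ z‖ ≤ 2 * B := by
  have dilation_le : ∀ i ≤ κ, ‖f (rseq i * z)‖ ≤ B := fun i hi =>
    hB _ ((norm_rseq_mul_le_rseq i hz).trans (rseq_monotone hi))
  rw [two_mul]
  cases κ with
  | zero =>
    exact (dilation_le 0 le_rfl).trans
      (le_add_of_nonneg_left ((norm_nonneg _).trans (dilation_le 0 le_rfl)))
  | succ κ => exact norm_sub_le_of_le (dilation_le _ le_rfl) (dilation_le κ κ.le_succ)

lemma norm_sub_le_div_mul_of_forall_norm_le {E : Type*} [NormedAddCommGroup E] [NormedSpace ℂ E]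
    {f : ℂ → E} {c : ℂ} {r R B : ℝ} (hrR : r < R) (hf : DifferentiableOn ℂ f (closedBall c R))
    (hB : ∀ x ∈ closedBall c R, ‖f x‖ ≤ B) {z w : ℂ} (hz : z ∈ closedBall c r)
    (hw : w ∈ closedBall c r) : ‖f z - f w‖ ≤ B / (R - r) * ‖z - w‖ := by
  have gap : 0 < R - r := sub_pos.2 hrR
  have closedBall_subset {x : ℂ} (hx : x ∈ closedBall c r) :
      closedBall x (R - r) ⊆ closedBall c R :=
    closedBall_subset_closedBall' (by linarith [mem_closedBall.1 hx])
  have differentiableAt : ∀ x ∈ closedBall c r, DifferentiableAt ℂ f x := fun x hx =>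
    hf.differentiableAt (mem_of_superset (closedBall_mem_nhds x gap) (closedBall_subset hx))
  have norm_deriv_le : ∀ x ∈ closedBall c r, ‖deriv f x‖ ≤ B / (R - r) := fun x hx =>
    norm_deriv_le_of_forall_mem_sphere_norm_le gap
      ((hf.mono (closedBall_subset hx)).diffContOnCl_ball subset_rfl)
      fun y hy => hB y (closedBall_subset hx (sphere_subset_closedBall hy))
  exact (convex_closedBall c r).norm_image_sub_le_of_norm_deriv_le differentiableAt norm_deriv_le
    hw hz

lemma norm_rseq_succ_mul_sub_le (κ : ℕ) {z : ℂ} (hz : z ∈ uD) :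
    ‖(rseq (κ + 1) * z - rseq κ * z : ℂ)‖ ≤ dseq κ := by
  have increment_nonneg : 0 ≤ rseq (κ + 1) - rseq κ := sub_nonneg.2 (rseq_monotone κ.le_succ)
  rw [← sub_mul, norm_mul, ← ofReal_sub, norm_real, Real.norm_of_nonneg increment_nonneg]
  exact (mul_le_of_le_one_right increment_nonneg (le_of_lt hz)).trans
    (sub_le_sub_right (rseq_lt_one _).le _)

lemma Holo.norm_block_le_dseq_mul (hf : Holo f) {j i : ℕ} {B : ℝ}
    (hB : ∀ x, ‖x‖ ≤ rseq (j + i + 1) → ‖f x‖ ≤ B) {z : ℂ} (hz : ‖z‖ ≤ rseq j) :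
    ‖block f (j + i + 1) z‖ ≤ 2 * (dseq i * B) := by
  have hj := dseq_pos j
  have hB₀ : 0 ≤ B := (norm_nonneg _).trans (hB 0 (by simpa using rseq_nonneg _))
  have gap : dseq j / 2 ≤ rseq (j + 1) - rseq j := by
    rw [rseq_eq_one_sub, rseq_eq_one_sub]
    linarith [dseq_succ_le_half j]
  have norm_le_of_mem {x : ℂ} (hx : x ∈ closedBall 0 (rseq (j + 1))) : ‖x‖ ≤ rseq (j + 1) :=
    mem_closedBall_zero_iff.1 hx
  have dilation_mem (κ : ℕ) : (rseq κ * z : ℂ) ∈ closedBall 0 (rseq j) :=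
    mem_closedBall_zero_iff.2 ((norm_rseq_mul_le_norm κ z).trans hz)
  have dist_le : ‖(rseq (j + i + 1) * z - rseq (j + i) * z : ℂ)‖ ≤ dseq j * dseq i :=
    (norm_rseq_succ_mul_sub_le (j + i) (mem_uD_of_norm_le_rseq hz)).trans (dseq_add_le j i)
  calc ‖block f (j + i + 1) z‖
      ≤ B / (rseq (j + 1) - rseq j) * ‖(rseq (j + i + 1) * z - rseq (j + i) * z : ℂ)‖ :=
        norm_sub_le_div_mul_of_forall_norm_le (by linarith)
          (hf.mono fun x hx => mem_uD_of_norm_le_rseq (norm_le_of_mem hx))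
          (fun x hx => hB x ((norm_le_of_mem hx).trans (rseq_monotone (by omega))))
          (dilation_mem (j + i + 1)) (dilation_mem (j + i))
    _ ≤ B / (dseq j / 2) * (dseq j * dseq i) := by gcongr
    _ = 2 * (dseq i * B) := by field_simp

end Blocks

/-! ### Sums of blocks -/

section Majorant

variable {a A : ℝ}

/-- For weights satisfying (LOG) with constants `a` and `A`, the quantity that controls the size on
`|z| ≤ r_j` of the block of index `κ`, relative to `1 / w(r_j)`. -/
def blockMajorant (a A : ℝ) (j κ : ℕ) : ℝ :=
  if κ ≤ j then a ^ (j - κ) else dseq (κ - j - 1) * A ^ (κ - j)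

lemma blockMajorant_of_le {j κ : ℕ} (h : κ ≤ j) : blockMajorant a A j κ = a ^ (j - κ) := if_pos h

lemma blockMajorant_add_succ (a A : ℝ) (j i : ℕ) :
    blockMajorant a A j (j + i + 1) = dseq i * A ^ (i + 1) := by
  rw [blockMajorant, if_neg (by omega), show j + i + 1 - j = i + 1 by omega, Nat.add_sub_cancel]

lemma blockMajorant_nonneg (ha : 0 ≤ a) (hA : 0 ≤ A) (j κ : ℕ) : 0 ≤ blockMajorant a A j κ := by
  have := dseq_pos (κ - j - 1)
  unfold blockMajorant
  positivity

lemma blockMajorant_tail (a A : ℝ) (j : ℕ) :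
    (fun i => blockMajorant a A j (i + (j + 1))) = fun i => dseq i * A ^ (i + 1) := by
  funext i
  rw [← blockMajorant_add_succ a A j, ← add_assoc, add_comm i j]

lemma summable_blockMajorant (a A : ℝ) (j : ℕ) : Summable (blockMajorant a A j) := by
  rw [← summable_nat_add_iff (j + 1), blockMajorant_tail]
  exact summable_dseq_mul_pow A

lemma tsum_blockMajorant_le (ha₀ : 0 ≤ a) (ha₁ : a < 1) (A : ℝ) (j : ℕ) :
    ∑' κ, blockMajorant a A j κ ≤ 1 / (1 - a) + dseqSum A := by
  rw [← (summable_blockMajorant a A j).sum_add_tsum_nat_add (j + 1), blockMajorant_tail, dseqSum]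
  gcongr
  calc ∑ κ ∈ Finset.range (j + 1), blockMajorant a A j κ
      = ∑ κ ∈ Finset.range (j + 1), a ^ (j + 1 - 1 - κ) :=
        Finset.sum_congr rfl fun κ hκ => blockMajorant_of_le (Finset.mem_range_succ_iff.1 hκ)
    _ = ∑ κ ∈ Finset.range (j + 1), a ^ κ := Finset.sum_range_reflect (a ^ ·) (j + 1)
    _ ≤ ∑' κ, a ^ κ :=
        (summable_geometric_of_lt_one ha₀ ha₁).sum_le_tsum _ fun κ _ => pow_nonneg ha₀ κ
    _ = 1 / (1 - a) := by rw [tsum_geometric_of_lt_one ha₀ ha₁, one_div]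

end Majorant

/-- A positive, possibly discontinuous, weight on the disc that decreases with the modulus at the
rate prescribed by (LOG 1) and (LOG 2) with constants `A` and `a`. -/
structure IsLogWeight (a A : ℝ) (v : ℂ → ℝ) : Prop where
  pos : ∀ z ∈ uD, 0 < v z
  nonInc : NonInc v
  log1 : Log1 A v
  log2 : Log2 a v

/-- The sum of the blocks of `f` with index in `J`, one of the two summands in the splitting of
`f`. -/
def blockSum (f : ℂ → ℂ) (J : Set ℕ) (z : ℂ) : ℂ := ∑' κ : J, block f κ z

/-- The constant by which splitting a function along its blocks enlarges weighted norms, for weights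
satisfying (LOG) with constants `a` and `A`. -/
def splitConst (a A : ℝ) : ℝ := 2 * A * (1 / (1 - a) + dseqSum A)

namespace IsLogWeight

variable {a A T : ℝ} {w : ℂ → ℝ} {f : ℂ → ℂ} {J : Set ℕ} {z : ℂ}

lemma one_le (hw : IsLogWeight a A w) : 1 ≤ A := hw.log1.one_le hw.nonInc hw.pos

lemma const_pos (hw : IsLogWeight a A w) : 0 < a := hw.log2.pos hw.pos

lemma dseqSum_pos (hw : IsLogWeight a A w) : 0 < dseqSum A := by
  linarith [hw.one_le, le_dseqSum (zero_le_one.trans hw.one_le)]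

lemma splitConst_pos (hw : IsLogWeight a A w) (ha : a < 1) : 0 < splitConst a A := by
  have hA := hw.one_le
  have hD := hw.dseqSum_pos
  have := sub_pos.2 ha
  unfold splitConst
  positivity

lemma norm_block_le (hw : IsLogWeight a A w) (hf : Holo f) (hT : 0 ≤ T) {κ j : ℕ}
    (hfw : ∀ x, ‖x‖ ≤ rseq κ → ‖f x‖ ≤ T / w (rseq κ)) (hz : ‖z‖ ≤ rseq j) :
    ‖block f κ z‖ ≤ 2 * T / w (rseq j) * blockMajorant a A j κ := by
  have hwκ := hw.pos _ (rseq_mem_uD κ)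
  have hwj := hw.pos _ (rseq_mem_uD j)
  rcases le_or_gt κ j with hκj | hjκ
  · have decay : w (rseq j) ≤ a ^ (j - κ) * w (rseq κ) := by
      simpa [Nat.add_sub_of_le hκj] using hw.log2.le_pow_mul hw.const_pos.le κ (j - κ)
    calc ‖block f κ z‖ ≤ 2 * (T / w (rseq κ)) :=
          norm_block_le_two_mul hfw (mem_uD_of_norm_le_rseq hz)
      _ = 2 * T / w (rseq κ) := by ring
      _ ≤ 2 * T / w (rseq j) * a ^ (j - κ) := by
          rw [div_mul_eq_mul_div, div_le_div_iff₀ hwκ hwj, mul_assoc (2 * T)]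
          gcongr
      _ = 2 * T / w (rseq j) * blockMajorant a A j κ := by rw [blockMajorant_of_le hκj]
  · obtain ⟨i, rfl⟩ := Nat.exists_eq_add_of_lt hjκ
    have hi := dseq_pos i
    have growth : w (rseq j) ≤ A ^ (i + 1) * w (rseq (j + i + 1)) :=
      hw.log1.le_pow_mul (zero_le_one.trans hw.one_le) j (i + 1)
    calc ‖block f (j + i + 1) z‖ ≤ 2 * (dseq i * (T / w (rseq (j + i + 1)))) :=
          hf.norm_block_le_dseq_mul hfw hz
      _ = 2 * T * dseq i / w (rseq (j + i + 1)) := by ring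
      _ ≤ 2 * T * dseq i / w (rseq j) * A ^ (i + 1) := by
          rw [div_mul_eq_mul_div, div_le_div_iff₀ hwκ hwj, mul_assoc (2 * T * dseq i)]
          gcongr
      _ = 2 * T / w (rseq j) * blockMajorant a A j (j + i + 1) := by
          rw [blockMajorant_add_succ]
          ring

lemma summable_block (hw : IsLogWeight a A w) (hf : Holo f) (hT : 0 ≤ T)
    (hfw : ∀ κ ∈ J, ∀ x, ‖x‖ ≤ rseq κ → ‖f x‖ ≤ T / w (rseq κ)) (hz : z ∈ uD) :
    Summable fun κ : J => block f κ z := by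
  obtain ⟨j, hj, -⟩ := exists_shell hz
  exact Summable.of_norm_bounded (((summable_blockMajorant a A j).subtype J).mul_left _)
    fun κ => hw.norm_block_le hf hT (hfw κ κ.2) hj

lemma holo_blockSum (hw : IsLogWeight a A w) (hf : Holo f) (hT : 0 ≤ T)
    (hfw : ∀ κ ∈ J, ∀ x, ‖x‖ ≤ rseq κ → ‖f x‖ ≤ T / w (rseq κ)) : Holo (blockSum f J) := by
  intro z hz
  obtain ⟨j, hj⟩ := (tendsto_rseq.eventually (eventually_gt_nhds hz)).exists
  have differentiableOn_ball : DifferentiableOn ℂ (blockSum f J) (ball 0 (rseq j)) :=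
    differentiableOn_tsum_of_summable_norm
      (((summable_blockMajorant a A j).subtype J).mul_left (2 * T / w (rseq j)))
      (fun κ => (hf.holo_block κ).mono fun x hx =>
        mem_uD_of_norm_le_rseq (mem_ball_zero_iff.1 hx).le)
      isOpen_ball
      (fun κ x hx => hw.norm_block_le hf hT (hfw κ κ.2) (mem_ball_zero_iff.1 hx).le)
  exact (differentiableOn_ball.differentiableAt
    (isOpen_ball.mem_nhds (mem_ball_zero_iff.2 hj))).differentiableWithinAt

lemma mul_norm_blockSum_le (hw : IsLogWeight a A w) (ha : a < 1) (hf : Holo f) (hT : 0 ≤ T)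
    (hfw : ∀ κ ∈ J, ∀ x, ‖x‖ ≤ rseq κ → ‖f x‖ ≤ T / w (rseq κ)) (hz : z ∈ uD) :
    w z * ‖blockSum f J z‖ ≤ splitConst a A * T := by
  have hA : 0 < A := zero_lt_one.trans_le hw.one_le
  obtain ⟨j, hzj, hj⟩ := exists_shell hz
  have hwj := hw.pos _ (rseq_mem_uD j)
  have summable_majorant := summable_blockMajorant a A j
  have norm_blockSum_le :
      ‖blockSum f J z‖ ≤ 2 * T / w (rseq j) * (1 / (1 - a) + dseqSum A) :=
    calc ‖blockSum f J z‖ ≤ 2 * T / w (rseq j) * ∑' κ : J, blockMajorant a A j κ :=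
          tsum_of_norm_bounded ((summable_majorant.subtype J).hasSum.mul_left _)
            fun κ => hw.norm_block_le hf hT (hfw κ κ.2) hzj
      _ ≤ 2 * T / w (rseq j) * ∑' κ, blockMajorant a A j κ := by
          gcongr
          exact summable_majorant.tsum_subtype_le _ J (blockMajorant_nonneg hw.const_pos.le hA.le j)
      _ ≤ 2 * T / w (rseq j) * (1 / (1 - a) + dseqSum A) := by
          gcongr
          exact tsum_blockMajorant_le hw.const_pos.le ha A j
  calc w z * ‖blockSum f J z‖
      ≤ A * w (rseq j) * (2 * T / w (rseq j) * (1 / (1 - a) + dseqSum A)) :=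
        mul_le_mul (hw.log1.le_mul_of_shell hw.nonInc hw.pos hz hj) norm_blockSum_le
          (norm_nonneg _) (by positivity)
    _ = splitConst a A * T := by
        rw [splitConst]
        field_simp

end IsLogWeight

lemma Holo.eq_blockSum_add_blockSum_compl {f : ℂ → ℂ} (hf : Holo f) {J : Set ℕ} {z : ℂ}
    (hz : z ∈ uD) (hJ : Summable fun κ : J => block f κ z)
    (hJc : Summable fun κ : ↑Jᶜ => block f κ z) :
    f z = blockSum f J z + blockSum f Jᶜ z :=
  tendsto_nhds_unique (hf.tendsto_sum_block hz)
    ((hJ.hasSum.add_compl hJc.hasSum).tendsto_sum_nat.comp (tendsto_add_atTop_nat 1))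

/-! ### Splitting -/

lemma Holo.exists_eq_add_of_one_div_le_max {a A ε S : ℝ} {u v w : ℂ → ℝ} {f : ℂ → ℂ}
    (hf : Holo f) (ha : a < 1) (hv : ∀ z ∈ uD, 0 < v z) (hanti : NonInc v)
    (hu : IsLogWeight a A u) (hw : IsLogWeight a A w) (hε : 0 ≤ ε) (hS : 0 ≤ S)
    (hmax : ∀ κ, 1 / v (rseq κ) ≤ max (ε / u (rseq κ)) (S / w (rseq κ)))
    (hfv : ∀ z ∈ uD, v z * ‖f z‖ ≤ 1) :
    ∃ g h : ℂ → ℂ, Holo g ∧ Holo h ∧ (∀ z ∈ uD, f z = g z + h z) ∧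
      (∀ z ∈ uD, u z * ‖g z‖ ≤ splitConst a A * ε) ∧
      (∀ z ∈ uD, w z * ‖h z‖ ≤ splitConst a A * S) := by
  let J : Set ℕ := {κ | 1 / v (rseq κ) ≤ ε / u (rseq κ)}
  have norm_le_u : ∀ κ ∈ J, ∀ x, ‖x‖ ≤ rseq κ → ‖f x‖ ≤ ε / u (rseq κ) := fun κ hκ x hx =>
    (hanti.norm_le_one_div hv hfv hx).trans hκ
  have norm_le_w : ∀ κ ∈ Jᶜ, ∀ x, ‖x‖ ≤ rseq κ → ‖f x‖ ≤ S / w (rseq κ) := fun κ hκ x hx =>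
    (hanti.norm_le_one_div hv hfv hx).trans ((le_max_iff.1 (hmax κ)).resolve_left hκ)
  exact ⟨blockSum f J, blockSum f Jᶜ,
    hu.holo_blockSum hf hε norm_le_u,
    hw.holo_blockSum hf hS norm_le_w,
    fun z hz => hf.eq_blockSum_add_blockSum_compl hz (hu.summable_block hf hε norm_le_u hz)
      (hw.summable_block hf hS norm_le_w hz),
    fun z hz => hu.mul_norm_blockSum_le ha hf hε norm_le_u hz,
    fun z hz => hw.mul_norm_blockSum_le ha hf hS norm_le_w hz⟩

theorem condQTilde_implies_P2bar_general (a' A : ℝ) (ha1 : a' < 1) (a : ℕ → ℕ → ℂ → ℝ)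
    (hlog : ∀ N n, IsLogWeight a' A (a N n)) (hQ : CondQTilde a) :
    ∀ N, ∃ M ≥ N, ∃ n, ∀ K ≥ M, ∀ m, ∀ ε > 0, ∃ k, ∃ S > 0,
      ∀ f : ℂ → ℂ, Holo f → (∀ z ∈ uD, a M m z * ‖f z‖ ≤ 1) →
        ∃ g h : ℂ → ℂ, Holo g ∧ Holo h ∧ (∀ z ∈ uD, f z = g z + h z) ∧
          (∀ z ∈ uD, a N n z * ‖g z‖ ≤ ε) ∧
          (∀ z ∈ uD, a K k z * ‖h z‖ ≤ S) := by
  intro N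
  obtain ⟨M, hMN, n, hQ⟩ := hQ N
  refine ⟨M, hMN, n, fun K hK m ε hε => ?_⟩
  set C₁ := Real.exp 1 * dseqSum A
  set C₂ := splitConst a' A with hC₂_def
  have hC₁ : 0 < C₁ := mul_pos (Real.exp_pos 1) (hlog N n).dseqSum_pos
  have hC₂ : 0 < C₂ := (hlog N n).splitConst_pos ha1
  obtain ⟨k, S, hS, hq⟩ := hQ K hK m (ε / (C₁ * C₂)) (by positivity)
  have one_div_le_max (κ : ℕ) :
      1 / a M m (rseq κ) ≤ max (ε / C₂ / a N n (rseq κ)) (C₁ * S / a K k (rseq κ)) := by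
    have hκ := rseq_mem_uD κ
    have hak := (hlog K k).pos _ hκ
    calc 1 / a M m (rseq κ) ≤ C₁ * growthTilde (fun x => 1 / a M m x) (rseq κ) :=
          (hlog M m).log1.one_div_le_mul_growthTilde (hlog M m).nonInc (hlog M m).pos κ
      _ ≤ C₁ * max (ε / (C₁ * C₂) / a N n (rseq κ)) (S / a K k (rseq κ)) := by
          gcongr
          exact (hq _ hκ).trans (growthTilde_le hκ (le_max_of_le_right (by positivity)))
      _ = max (ε / C₂ / a N n (rseq κ)) (C₁ * S / a K k (rseq κ)) := by
          rw [mul_max_of_nonneg _ _ hC₁.le]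
          congr 1 <;> field_simp
  refine ⟨k, C₂ * (C₁ * S), by positivity, fun f hf hfv => ?_⟩
  simpa only [← hC₂_def, mul_div_cancel₀ _ hC₂.ne'] using
    hf.exists_eq_add_of_one_div_le_max ha1 (hlog M m).pos (hlog M m).nonInc (hlog N n)
      (hlog K k) (by positivity) (by positivity) one_div_le_max hfv

/-- (LOG) + (Q)~ implies condition (P̄₂) for the spectrum:
every f in B_{M,m} decomposes as f = g + h with ‖g‖_{a_{N,n}} ≤ ε and ‖h‖_{a_{K,k}} ≤ S. -/
theorem condQTilde_implies_P2bar (a' A : ℝ) (ha0 : 0 < a') (ha1 : a' < 1) (hA : 1 < A)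
    (a : ℕ → ℕ → ℂ → ℝ)
    (hW : ∀ N n, IsWeight (a N n))
    (hMono : MonoSeq a)
    (hLOG : SeqLOG a' A a)
    (hQ : CondQTilde a) :
    ∀ N, ∃ M ≥ N, ∃ n, ∀ K ≥ M, ∀ m, ∀ ε > 0, ∃ k, ∃ S > 0,
      ∀ f : ℂ → ℂ, Holo f → (∀ z ∈ uD, a M m z * ‖f z‖ ≤ 1) →
        ∃ g h : ℂ → ℂ, Holo g ∧ Holo h ∧ (∀ z ∈ uD, f z = g z + h z) ∧
          (∀ z ∈ uD, a N n z * ‖g z‖ ≤ ε) ∧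
          (∀ z ∈ uD, a K k z * ‖h z‖ ≤ S) :=
  condQTilde_implies_P2bar_general a' A ha1 a
    (fun N n => ⟨(hW N n).2, (hLOG N n).2.1, (hLOG N n).2.2.2.1, (hLOG N n).2.2.2.2⟩) hQ
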